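/- Let θ ∈ (0, 1), let 0 < μ ≤ 1/√n, let X₀ ∈ ℝ^{n×p} have i.i.d. BG(θ) entries, and fix any w ∈ Γ with w ≠ 0. Then for every t > 0, P[ | wᵀ∇²g(w; X₀)w/‖w‖² − E[wᵀ∇²g(w; X₀)w/‖w‖²] | ≥ t ] ≤ 4 exp( −p μ² t² / (512 n² + 32 n μ t) ). -/

import Mathlib

open MeasureTheory ProbabilityTheory Real Matrix
open scoped RealInnerProductSpace ENNReal NNReal

noncomputable section

/-- The Bernoulli–Gaussian law `BG(θ)`: with probability `θ` a standard Gaussian,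
with probability `1-θ` a point mass at `0`. -/
def bg (θ : ℝ) : Measure ℝ :=
  θ.toNNReal • gaussianReal 0 1 + (1 - θ).toNNReal • Measure.dirac 0

instance bg.instIsFiniteMeasure (θ : ℝ) : IsFiniteMeasure (bg θ) := by
  unfold bg; infer_instance

/-- Law of an `n × p` matrix with i.i.d. `BG(θ)` entries. -/
def bgMatrix (θ : ℝ) (n p : ℕ) : Measure (Fin n → Fin p → ℝ) :=
  Measure.pi fun _ => Measure.pi fun _ => bg θ

/-- Law of a vector in `ℝ^n` with i.i.d. `BG(θ)` entries. -/
def bgVec (θ : ℝ) (n : ℕ) : Measure (Fin n → ℝ) :=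
  Measure.pi fun _ => bg θ

/-- The smooth sparsity surrogate `h_μ(z) = μ log cosh (z/μ)`. -/
def hmu (μ z : ℝ) : ℝ := μ * Real.log (Real.cosh (z / μ))

/-- Reparametrization `q(w) = (w, √(1-‖w‖²))` with `w` in the unit ball of `ℝ^{n-1}`. -/
def qmap (n : ℕ) (w : EuclideanSpace ℝ (Fin (n - 1))) : Fin n → ℝ :=
  fun i => if h : (i : ℕ) < n - 1 then w ⟨i, h⟩ else Real.sqrt (1 - ‖w‖ ^ 2)

/-- `f(q; Y) = (1/p) ∑ₖ h_μ(qᵀ yₖ)`. -/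
def ffun (n p : ℕ) (μ : ℝ) (Y : Matrix (Fin n) (Fin p) ℝ)
    (q : EuclideanSpace ℝ (Fin n)) : ℝ :=
  (p : ℝ)⁻¹ * ∑ k : Fin p, hmu μ (∑ i : Fin n, q i * Y i k)

/-- `g(w; Y) = f(q(w); Y)`. -/
def gfun (n p : ℕ) (μ : ℝ) (Y : Matrix (Fin n) (Fin p) ℝ)
    (w : EuclideanSpace ℝ (Fin (n - 1))) : ℝ :=
  (p : ℝ)⁻¹ * ∑ k : Fin p, hmu μ (∑ i : Fin n, qmap n w i * Y i k)

/-- Gradient `∇g(w; Y)` in `w`. -/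
def gradg (n p : ℕ) (μ : ℝ) (Y : Matrix (Fin n) (Fin p) ℝ)
    (w : EuclideanSpace ℝ (Fin (n - 1))) : EuclideanSpace ℝ (Fin (n - 1)) :=
  gradient (gfun n p μ Y) w

/-- Hessian `∇²g(w; Y)` in `w`, as a continuous linear map. -/
def hessg (n p : ℕ) (μ : ℝ) (Y : Matrix (Fin n) (Fin p) ℝ)
    (w : EuclideanSpace ℝ (Fin (n - 1))) :
    EuclideanSpace ℝ (Fin (n - 1)) →L[ℝ] EuclideanSpace ℝ (Fin (n - 1)) :=
  fderiv ℝ (gradg n p μ Y) w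

/-- The set `Γ = {w : ‖w‖ < √((4n-1)/(4n))}`. -/
def GammaSet (n : ℕ) : Set (EuclideanSpace ℝ (Fin (n - 1))) :=
  {w | ‖w‖ < Real.sqrt ((4 * (n : ℝ) - 1) / (4 * n))}

/-- Spectral (`ℓ²→ℓ²` operator) norm of а matrix. -/
def specNorm {m k : ℕ} (M : Matrix (Fin m) (Fin k) ℝ) : ℝ :=
  ‖LinearMap.toContinuousLinearMap (Matrix.toEuclideanLin M)‖

/-- Largest magnitude of an entry of a matrix. -/
def Minf {m k : ℕ} (M : Matrix (Fin m) (Fin k) ℝ) : ℝ := ⨆ i, ⨆ j, |M i j|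

/-- Condition number: ratio of largest to smallest singular value. -/
def kappa {n : ℕ} (s : Fin n → ℝ) : ℝ := (⨆ i, s i) / (⨅ i, s i)

/-- Signed standard basis vectors `{± e_i}` of `ℝ^n`. -/
def SignedBasis (n : ℕ) : Set (EuclideanSpace ℝ (Fin n)) :=
  {b | ∃ i : Fin n, b = EuclideanSpace.single i (1 : ℝ) ∨ b = -EuclideanSpace.single i (1 : ℝ)}

/-- Set of local minimizers of `f(·; Y)` over the unit sphere `S^{n-1}`. -/
def LocalMins (n p : ℕ) (μ : ℝ) (Y : Matrix (Fin n) (Fin p) ℝ) :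
    Set (EuclideanSpace ℝ (Fin n)) :=
  {q | q ∈ Metric.sphere (0 : EuclideanSpace ℝ (Fin n)) 1 ∧
       IsLocalMinOn (ffun n p μ Y) (Metric.sphere (0 : EuclideanSpace ℝ (Fin n)) 1) q}

/-- Expected objective `E_x[h_μ(q(w)ᵀ x)]` for `x` with i.i.d. `BG(θ)` entries. -/
def Gexp (n : ℕ) (θ μ : ℝ) (w : EuclideanSpace ℝ (Fin (n - 1))) : ℝ :=
  ∫ x, hmu μ (∑ i : Fin n, qmap n w i * x i) ∂(bgVec θ n)

/-!
In a direction `v` the quadratic form of the Hessian is the mean over the columns `x` of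
`μ⁻¹ sech²(qᵀx/μ) (aᵀx)² + tanh(qᵀx/μ) bᵀx`, where `a` and `b` are the first and second derivatives
of `q(w)` along `v`. By Jensen's inequality `BG(θ)`, a mixture of a standard Gaussian with its mean,
is below that Gaussian in the convex order, so a linear form `∑ cᵢ xᵢ` is below a centred Gaussian
of variance `∑ cᵢ²` and has smaller absolute moments. Since `1 / (1 - ‖w‖²) ≤ 4n` on `Γ`, both
summands then satisfy Bernstein's moment condition with scale `8n‖v‖²/μ`, and Bernstein's inequality
applies to the independent columns.
-/

/-- Convex order of laws on `ℝ`, tested on nonnegative convex functions only, so that both sides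
are Lebesgue integrals and no integrability is needed. -/
def ConvexLE (μ ν : Measure ℝ) : Prop :=
  ∀ f : ℝ → ℝ, ConvexOn ℝ Set.univ f → (∀ x, 0 ≤ f x) →
    ∫⁻ x, .ofReal (f x) ∂μ ≤ ∫⁻ x, .ofReal (f x) ∂ν

lemma continuous_of_convexOn_univ {f : ℝ → ℝ} (hf : ConvexOn ℝ Set.univ f) : Continuous f :=
  continuousOn_univ.1 (hf.continuousOn isOpen_univ)

namespace ConvexLE

variable {μ μ₁ μ₂ ν ν₁ ν₂ : Measure ℝ}

lemma dirac_integral [IsProbabilityMeasure ν] (hν : Integrable (fun x ↦ x) ν) :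
    ConvexLE (Measure.dirac (∫ x, x ∂ν)) ν := by
  intro f hf hf0
  have hcont := continuous_of_convexOn_univ hf
  rw [lintegral_dirac' _ hcont.measurable.ennreal_ofReal]
  by_cases hfν : Integrable f ν
  · rw [← ofReal_integral_eq_lintegral_ofReal hfν (.of_forall hf0)]
    exact ENNReal.ofReal_le_ofReal <| hf.map_integral_le hcont.continuousOn isClosed_univ
      (.of_forall fun _ ↦ Set.mem_univ _) hν hfν
  · have htop := mt (lintegral_ofReal_ne_top_iff_integrable hcont.aestronglyMeasurable
      (.of_forall hf0)).1 hfν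
    rw [not_not.1 htop]
    exact le_top

lemma smul_add_smul (h₁ : ConvexLE μ₁ ν) (h₂ : ConvexLE μ₂ ν) {a b : ℝ≥0} (hab : a + b = 1) :
    ConvexLE (a • μ₁ + b • μ₂) ν := by
  intro f hf hf0
  calc ∫⁻ x, .ofReal (f x) ∂(a • μ₁ + b • μ₂)
      = a * ∫⁻ x, .ofReal (f x) ∂μ₁ + b * ∫⁻ x, .ofReal (f x) ∂μ₂ := by
        simp only [lintegral_add_measure, lintegral_smul_measure, ENNReal.smul_def, smul_eq_mul]
    _ ≤ a * ∫⁻ x, .ofReal (f x) ∂ν + b * ∫⁻ x, .ofReal (f x) ∂ν := by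
        exact add_le_add (mul_le_mul' le_rfl (h₁ f hf hf0)) (mul_le_mul' le_rfl (h₂ f hf hf0))
    _ = ∫⁻ x, .ofReal (f x) ∂ν := by
        rw [← add_mul, ← ENNReal.coe_add, hab, ENNReal.coe_one, one_mul]

lemma map_const_mul (h : ConvexLE μ ν) (c : ℝ) :
    ConvexLE (μ.map (c * ·)) (ν.map (c * ·)) := by
  intro f hf hf0
  have hmeas := (continuous_of_convexOn_univ hf).measurable.ennreal_ofReal
  rw [lintegral_map hmeas (by fun_prop), lintegral_map hmeas (by fun_prop)]
  exact h (fun x ↦ f (c * x)) (hf.comp_linearMap (LinearMap.mulLeft ℝ c)) fun _ ↦ hf0 _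

lemma conv [SFinite μ₁] [SFinite μ₂] [SFinite ν₁] [SFinite ν₂]
    (h₁ : ConvexLE μ₁ ν₁) (h₂ : ConvexLE μ₂ ν₂) : ConvexLE (μ₁ ∗ μ₂) (ν₁ ∗ ν₂) := by
  intro f hf hf0
  have hmeas := (continuous_of_convexOn_univ hf).measurable.ennreal_ofReal
  rw [Measure.lintegral_conv hmeas, Measure.lintegral_conv hmeas]
  calc ∫⁻ x, ∫⁻ y, .ofReal (f (x + y)) ∂μ₂ ∂μ₁
      ≤ ∫⁻ x, ∫⁻ y, .ofReal (f (x + y)) ∂ν₂ ∂μ₁ :=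
        lintegral_mono fun x ↦ h₂ _ (hf.translate_right x) fun _ ↦ hf0 _
    _ = ∫⁻ y, ∫⁻ x, .ofReal (f (x + y)) ∂μ₁ ∂ν₂ :=
        lintegral_lintegral_swap (hmeas.comp measurable_add).aemeasurable
    _ ≤ ∫⁻ y, ∫⁻ x, .ofReal (f (x + y)) ∂ν₁ ∂ν₂ :=
        lintegral_mono fun y ↦ h₁ _ (hf.translate_left y) fun _ ↦ hf0 _
    _ = ∫⁻ x, ∫⁻ y, .ofReal (f (x + y)) ∂ν₂ ∂ν₁ :=
        lintegral_lintegral_swap (hmeas.comp (measurable_snd.add measurable_fst)).aemeasurable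

lemma map_sum_gaussianReal {ι Ω : Type*} {mΩ : MeasurableSpace Ω} {P : Measure Ω}
    {X : ι → Ω → ℝ} {v : ι → ℝ≥0} (hX : ∀ i, AEMeasurable (X i) P) (hind : iIndepFun X P)
    (h : ∀ i, ConvexLE (P.map (X i)) (gaussianReal 0 (v i))) (s : Finset ι) :
    ConvexLE (P.map (∑ i ∈ s, X i)) (gaussianReal 0 (∑ i ∈ s, v i)) := by
  have := hind.isProbabilityMeasure
  induction s using Finset.cons_induction with
  | empty =>
    have hzero : P.map (0 : Ω → ℝ) = Measure.dirac 0 := by simp [Pi.zero_def]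
    simp only [Finset.sum_empty, gaussianReal_zero_var, hzero]
    exact fun _ _ _ ↦ le_rfl
  | cons i s hi ih =>
    have hindep := (hind.indepFun_finsetSum_of_notMem₀ hX hi).symm
    have := (gaussianReal_conv_gaussianReal (m₁ := 0) (m₂ := 0) (v₁ := v i) (v₂ := ∑ j ∈ s, v j))
    rw [Finset.sum_cons, Finset.sum_cons, hindep.map_add_eq_map_conv_map₀ (hX i)
      (Finset.aemeasurable_sum _ fun j _ ↦ hX j), ← add_zero (0 : ℝ), ← this]
    exact (h i).conv ih

end ConvexLE

lemma toNNReal_add_toNNReal_one_sub {θ : ℝ} (hθ : θ ∈ Set.Icc 0 1) :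
    θ.toNNReal + (1 - θ).toNNReal = 1 := by
  rw [← Real.toNNReal_add hθ.1 (sub_nonneg.2 hθ.2), add_sub_cancel, Real.toNNReal_one]

lemma isProbabilityMeasure_bg {θ : ℝ} (hθ : θ ∈ Set.Icc 0 1) : IsProbabilityMeasure (bg θ) where
  measure_univ := by
    simp only [bg, Measure.add_apply, Measure.smul_apply, measure_univ, ENNReal.smul_def,
      smul_eq_mul, mul_one]
    rw [← ENNReal.coe_add, toNNReal_add_toNNReal_one_sub hθ, ENNReal.coe_one]

lemma convexLE_bg_gaussianReal {θ : ℝ} (hθ : θ ∈ Set.Icc 0 1) :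
    ConvexLE (bg θ) (gaussianReal 0 1) := by
  have hdirac : ConvexLE (Measure.dirac 0) (gaussianReal 0 1) := by
    simpa using ConvexLE.dirac_integral (ν := gaussianReal 0 1)
      ((memLp_id_gaussianReal 1).integrable le_rfl)
  exact .smul_add_smul (fun _ _ _ ↦ le_rfl) hdirac (toNNReal_add_toNNReal_one_sub hθ)

lemma integral_abs_pow_gaussianReal (m : ℕ) :
    ∫ x, |x| ^ m ∂gaussianReal 0 1 =
      (√(2 * π))⁻¹ * (2⁻¹ : ℝ) ^ (-((m : ℝ) + 1) / 2) * Gamma ((m + 1) / 2) := by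
  have hhalf : ∫ x in Set.Ioi (0 : ℝ), x ^ m * rexp (-2⁻¹ * x ^ 2) =
      (2⁻¹ : ℝ) ^ (-((m : ℝ) + 1) / 2) * (1 / 2) * Gamma ((m + 1) / 2) := by
    simpa only [rpow_natCast, rpow_ofNat] using integral_rpow_mul_exp_neg_mul_rpow
      (p := 2) (q := m) (b := 2⁻¹) two_pos (by linarith [m.cast_nonneg (α := ℝ)]) (by norm_num)
  rw [integral_gaussianReal_eq_integral_smul one_ne_zero]
  calc ∫ x, gaussianPDFReal 0 1 x • |x| ^ m
      = ∫ x : ℝ, (√(2 * π))⁻¹ * (|x| ^ m * rexp (-2⁻¹ * |x| ^ 2)) := by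
        congr! 2 with x
        simp only [gaussianPDFReal, NNReal.coe_one, mul_one, sub_zero, smul_eq_mul, sq_abs]
        ring_nf
    _ = _ := by
        rw [integral_const_mul, integral_comp_abs (f := fun x ↦ x ^ m * rexp (-2⁻¹ * x ^ 2)), hhalf]
        ring

lemma integral_abs_pow_add_two_gaussianReal (m : ℕ) :
    ∫ x, |x| ^ (m + 2) ∂gaussianReal 0 1 = (m + 1) * ∫ x, |x| ^ m ∂gaussianReal 0 1 := by
  have hGamma : Gamma (((m + 2 : ℕ) + 1) / 2) = (m + 1) / 2 * Gamma ((m + 1) / 2) := by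
    rw [← Gamma_add_one (by positivity)]
    push_cast
    ring_nf
  have hpow : (2⁻¹ : ℝ) ^ (-(((m + 2 : ℕ) : ℝ) + 1) / 2) =
      2 * (2⁻¹ : ℝ) ^ (-((m : ℝ) + 1) / 2) := by
    rw [show -(((m + 2 : ℕ) : ℝ) + 1) / 2 = -1 + -((m : ℝ) + 1) / 2 by push_cast; ring,
      rpow_add (by norm_num), rpow_neg_one, inv_inv]
  rw [integral_abs_pow_gaussianReal, integral_abs_pow_gaussianReal, hGamma, hpow]
  ring

lemma integrable_abs_pow_gaussianReal (m : ℕ) :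
    Integrable (fun x ↦ |x| ^ m) (gaussianReal 0 1) :=
  (memLp_id_gaussianReal m).integrable_norm_pow'

lemma integral_abs_sq_gaussianReal : ∫ x, |x| ^ 2 ∂gaussianReal 0 1 = 1 := by
  simpa using integral_abs_pow_add_two_gaussianReal 0

lemma integral_abs_gaussianReal_le_one : ∫ x, |x| ∂gaussianReal 0 1 ≤ 1 := by
  have hinteg := integrable_abs_pow_gaussianReal
  calc ∫ x, |x| ∂gaussianReal 0 1
      ≤ ∫ x, (|x| ^ 2 + 1) / 2 ∂gaussianReal 0 1 :=
        integral_mono (by simpa using hinteg 1) (((hinteg 2).add (integrable_const 1)).div_const 2)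
          fun x ↦ by dsimp only; linarith [two_mul_le_add_sq |x| 1]
    _ = 1 := by
        rw [integral_div, integral_add (hinteg 2) (integrable_const 1),
          integral_abs_sq_gaussianReal]
        simp

lemma two_mul_integral_abs_pow_gaussianReal_le_factorial (m : ℕ) :
    2 * ∫ x, |x| ^ (m + 2) ∂gaussianReal 0 1 ≤ (m + 2).factorial := by
  induction m using Nat.twoStepInduction with
  | zero => simp [integral_abs_sq_gaussianReal, -sq_abs]
  | one =>
    have := integral_abs_gaussianReal_le_one
    rw [integral_abs_pow_add_two_gaussianReal 1]
    norm_num [Nat.factorial]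
    linarith
  | more m ih _ =>
    rw [integral_abs_pow_add_two_gaussianReal (m + 2)]
    calc 2 * (((m + 2 : ℕ) + 1) * ∫ x, |x| ^ (m + 2) ∂gaussianReal 0 1)
        = (m + 3 : ℕ) * (2 * ∫ x, |x| ^ (m + 2) ∂gaussianReal 0 1) := by push_cast; ring
      _ ≤ (m + 3 : ℕ) * (m + 2).factorial := by gcongr
      _ ≤ (m + 2 + 2).factorial := by
        rw [← Nat.cast_mul, ← Nat.factorial_succ]
        exact_mod_cast Nat.factorial_le (Nat.le_succ _)

lemma two_mul_integral_abs_pow_two_mul_gaussianReal_le (m : ℕ) :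
    2 * ∫ x, |x| ^ (2 * (m + 1)) ∂gaussianReal 0 1 ≤ 2 ^ (m + 1) * (m + 1).factorial := by
  induction m with
  | zero => simp [integral_abs_sq_gaussianReal, -sq_abs]
  | succ m ih =>
    rw [show 2 * (m + 1 + 1) = 2 * (m + 1) + 2 by ring, integral_abs_pow_add_two_gaussianReal]
    calc 2 * (((2 * (m + 1) : ℕ) + 1) * ∫ x, |x| ^ (2 * (m + 1)) ∂gaussianReal 0 1)
        = (2 * m + 3) * (2 * ∫ x, |x| ^ (2 * (m + 1)) ∂gaussianReal 0 1) := by push_cast; ring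
      _ ≤ (2 * m + 4) * (2 ^ (m + 1) * (m + 1).factorial) := by gcongr; norm_num
      _ = 2 ^ (m + 1 + 1) * (m + 1 + 1).factorial := by
        rw [Nat.factorial_succ (m + 1)]; push_cast; ring

lemma lintegral_abs_pow_gaussianReal (s : ℝ≥0) (m : ℕ) :
    ∫⁻ x, .ofReal (|x| ^ m) ∂gaussianReal 0 s =
      .ofReal (√s ^ m * ∫ x, |x| ^ m ∂gaussianReal 0 1) := by
  have hmap : gaussianReal 0 s = (gaussianReal 0 1).map (√s * ·) := by
    rw [gaussianReal_map_const_mul, mul_zero, mul_one]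
    congr 1
    exact NNReal.eq (sq_sqrt s.2).symm
  rw [hmap, lintegral_map (by fun_prop) (by fun_prop), ← integral_const_mul,
    ofReal_integral_eq_lintegral_ofReal ((integrable_abs_pow_gaussianReal m).const_mul _)
      (.of_forall fun x ↦ by positivity)]
  simp only [abs_mul, mul_pow, abs_of_nonneg (sqrt_nonneg _)]

lemma ConvexLE.lintegral_abs_pow_le {μ : Measure ℝ} {s : ℝ≥0} (h : ConvexLE μ (gaussianReal 0 s))
    (m : ℕ) :
    ∫⁻ x, .ofReal (|x| ^ m) ∂μ ≤ .ofReal (√s ^ m * ∫ x, |x| ^ m ∂gaussianReal 0 1) :=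
  lintegral_abs_pow_gaussianReal s m ▸
    h _ (convexOn_univ_norm.pow (fun _ _ ↦ norm_nonneg _) m) fun _ ↦ by positivity

/-- Bernstein's moment condition: the absolute moments of order at least two are bounded by those
in the hypothesis of Bernstein's inequality, with variance proxy `v` and scale `c`. They are
Lebesgue integrals, so that the bounds include integrability. -/
structure HasBernsteinMoments {Ω : Type*} {mΩ : MeasurableSpace Ω} (X : Ω → ℝ) (v c : ℝ)
    (P : Measure Ω) : Prop where
  aemeasurable : AEMeasurable X P
  lintegral_le : ∀ m : ℕ,
    ∫⁻ ω, .ofReal (|X ω| ^ (m + 2)) ∂P ≤ .ofReal ((m + 2).factorial / 2 * v * c ^ m)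

section Bernstein

variable {Ω : Type*} {mΩ : MeasurableSpace Ω} {P : Measure Ω} {X Y : Ω → ℝ} {v w c d : ℝ}

lemma hasSum_exp_abs_sub (y : ℝ) :
    HasSum (fun m : ℕ ↦ |y| ^ (m + 2) / (m + 2).factorial) (rexp |y| - 1 - |y|) := by
  have h := (hasSum_nat_add_iff' 2).2 (NormedSpace.expSeries_div_hasSum_exp |y|)
  simpa [Finset.sum_range_succ, ← Real.exp_eq_exp_ℝ, sub_sub] using h

lemma exp_abs_sub_nonneg (y : ℝ) : 0 ≤ rexp |y| - 1 - |y| := by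
  linarith [add_one_le_exp |y|]

lemma exp_le_one_add_add_exp_abs_sub (y : ℝ) :
    rexp y ≤ 1 + y + (rexp |y| - 1 - |y|) := by
  rcases le_total 0 y with hy | hy
  · simp [abs_of_nonneg hy]
  · have hsinh : sinh y ≤ y := sinh_le_self_iff.2 hy
    rw [sinh_eq] at hsinh
    rw [abs_of_nonpos hy]
    linarith

namespace HasBernsteinMoments

lemma mono (h : HasBernsteinMoments X v c P) (hY : AEMeasurable Y P) (hYX : ∀ ω, |Y ω| ≤ |X ω|)
    (hc : 0 ≤ c) (hw : 0 ≤ w) (hvw : v ≤ w) (hcd : c ≤ d) : HasBernsteinMoments Y w d P where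
  aemeasurable := hY
  lintegral_le m := calc
    ∫⁻ ω, .ofReal (|Y ω| ^ (m + 2)) ∂P ≤ ∫⁻ ω, .ofReal (|X ω| ^ (m + 2)) ∂P := by
      exact lintegral_mono fun ω ↦
        ENNReal.ofReal_le_ofReal (pow_le_pow_left₀ (abs_nonneg _) (hYX ω) _)
    _ ≤ .ofReal ((m + 2).factorial / 2 * v * c ^ m) := h.lintegral_le m
    _ ≤ .ofReal ((m + 2).factorial / 2 * w * d ^ m) := by gcongr

lemma neg (h : HasBernsteinMoments X v c P) : HasBernsteinMoments (-X) v c P where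
  aemeasurable := h.aemeasurable.neg
  lintegral_le m := by simpa using h.lintegral_le m

lemma const_mul (h : HasBernsteinMoments X v c P) (a : ℝ) :
    HasBernsteinMoments (fun ω ↦ a * X ω) (a ^ 2 * v) (|a| * c) P where
  aemeasurable := h.aemeasurable.const_mul a
  lintegral_le m := calc
    ∫⁻ ω, .ofReal (|a * X ω| ^ (m + 2)) ∂P
        = .ofReal (|a| ^ (m + 2)) * ∫⁻ ω, .ofReal (|X ω| ^ (m + 2)) ∂P := by
      rw [← lintegral_const_mul' _ _ ENNReal.ofReal_ne_top]
      simp only [abs_mul, mul_pow, ENNReal.ofReal_mul (pow_nonneg (abs_nonneg a) _)]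
    _ ≤ .ofReal (|a| ^ (m + 2)) * .ofReal ((m + 2).factorial / 2 * v * c ^ m) := by
      gcongr
      exact h.lintegral_le m
    _ = .ofReal ((m + 2).factorial / 2 * (a ^ 2 * v) * (|a| * c) ^ m) := by
      rw [← ENNReal.ofReal_mul (by positivity), ← sq_abs a]
      ring_nf

lemma add (hX : HasBernsteinMoments X v c P) (hY : HasBernsteinMoments Y v c P) :
    HasBernsteinMoments (X + Y) (4 * v) (2 * c) P where
  aemeasurable := hX.aemeasurable.add hY.aemeasurable
  lintegral_le m := by
    have hpow (ω : Ω) : |X ω + Y ω| ^ (m + 2) ≤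
        2 ^ (m + 1) * (|X ω| ^ (m + 2) + |Y ω| ^ (m + 2)) :=
      (pow_le_pow_left₀ (abs_nonneg _) (abs_add_le _ _) _).trans
        (add_pow_le (abs_nonneg _) (abs_nonneg _) (m + 2))
    have hmeas : AEMeasurable (fun ω ↦ ENNReal.ofReal (|X ω| ^ (m + 2))) P := by
      have := hX.aemeasurable
      fun_prop
    calc ∫⁻ ω, .ofReal (|X ω + Y ω| ^ (m + 2)) ∂P
        ≤ ∫⁻ ω, .ofReal (2 ^ (m + 1)) *
            (.ofReal (|X ω| ^ (m + 2)) + .ofReal (|Y ω| ^ (m + 2))) ∂P := by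
          gcongr with ω
          rw [← ENNReal.ofReal_add (by positivity) (by positivity),
            ← ENNReal.ofReal_mul (by positivity)]
          exact ENNReal.ofReal_le_ofReal (hpow ω)
      _ = .ofReal (2 ^ (m + 1)) * (∫⁻ ω, .ofReal (|X ω| ^ (m + 2)) ∂P +
            ∫⁻ ω, .ofReal (|Y ω| ^ (m + 2)) ∂P) := by
          rw [lintegral_const_mul' _ _ ENNReal.ofReal_ne_top, lintegral_add_left' hmeas]
      _ ≤ .ofReal (2 ^ (m + 1)) * (.ofReal ((m + 2).factorial / 2 * v * c ^ m) +
            .ofReal ((m + 2).factorial / 2 * v * c ^ m)) := by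
          gcongr
          exacts [hX.lintegral_le m, hY.lintegral_le m]
      _ = .ofReal ((m + 2).factorial / 2 * (4 * v) * (2 * c) ^ m) := by
          rw [← two_mul, ← ENNReal.ofReal_ofNat, ← ENNReal.ofReal_mul (by positivity),
            ← ENNReal.ofReal_mul (by positivity)]
          ring_nf

lemma comp_measurePreserving {Ω' : Type*} {mΩ' : MeasurableSpace Ω'} {Q : Measure Ω'} {f : Ω' → Ω}
    (h : HasBernsteinMoments X v c P) (hf : MeasurePreserving f Q P) :
    HasBernsteinMoments (X ∘ f) v c Q where
  aemeasurable := h.aemeasurable.comp_quasiMeasurePreserving hf.quasiMeasurePreserving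
  lintegral_le m := by
    have hX := h.aemeasurable
    rw [← hf.map_eq] at hX
    have hle := h.lintegral_le m
    rwa [← hf.map_eq, lintegral_map' (by fun_prop) hf.aemeasurable] at hle

lemma of_convexLE_gaussianReal {s : ℝ≥0} (hX : AEMeasurable X P)
    (h : ConvexLE (P.map X) (gaussianReal 0 s)) : HasBernsteinMoments X s (√s) P where
  aemeasurable := hX
  lintegral_le m := calc
    ∫⁻ ω, .ofReal (|X ω| ^ (m + 2)) ∂P = ∫⁻ x, .ofReal (|x| ^ (m + 2)) ∂P.map X :=
      (lintegral_map' (f := fun x ↦ .ofReal (|x| ^ (m + 2))) (by fun_prop) hX).symm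
    _ ≤ .ofReal (√s ^ (m + 2) * ∫ x, |x| ^ (m + 2) ∂gaussianReal 0 1) :=
      h.lintegral_abs_pow_le _
    _ ≤ .ofReal ((m + 2).factorial / 2 * s * √s ^ m) := by
      rw [pow_add, sq_sqrt s.coe_nonneg]
      refine ENNReal.ofReal_le_ofReal ?_
      nlinarith [two_mul_integral_abs_pow_gaussianReal_le_factorial m,
        mul_nonneg (pow_nonneg (sqrt_nonneg s) m) s.coe_nonneg]

lemma sq_of_convexLE_gaussianReal {s : ℝ≥0} (hX : AEMeasurable X P)
    (h : ConvexLE (P.map X) (gaussianReal 0 s)) :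
    HasBernsteinMoments (fun ω ↦ X ω ^ 2) ((2 * s) ^ 2) (2 * s) P where
  aemeasurable := hX.pow_const 2
  lintegral_le m := calc
    ∫⁻ ω, .ofReal (|X ω ^ 2| ^ (m + 2)) ∂P = ∫⁻ x, .ofReal (|x| ^ (2 * (m + 2))) ∂P.map X := by
      rw [lintegral_map' (f := fun x ↦ .ofReal (|x| ^ (2 * (m + 2)))) (by fun_prop) hX]
      simp only [abs_pow, pow_mul]
    _ ≤ .ofReal (√s ^ (2 * (m + 2)) * ∫ x, |x| ^ (2 * (m + 2)) ∂gaussianReal 0 1) :=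
      h.lintegral_abs_pow_le _
    _ ≤ .ofReal ((m + 2).factorial / 2 * (2 * s) ^ 2 * (2 * s) ^ m) := by
      rw [pow_mul, sq_sqrt s.coe_nonneg]
      refine ENNReal.ofReal_le_ofReal ?_
      calc (s : ℝ) ^ (m + 2) * ∫ x, |x| ^ (2 * (m + 2)) ∂gaussianReal 0 1
          ≤ s ^ (m + 2) * (2 ^ (m + 2) * (m + 2).factorial / 2) := by
            gcongr
            linarith [two_mul_integral_abs_pow_two_mul_gaussianReal_le (m + 1)]
        _ = (m + 2).factorial / 2 * (2 * s) ^ 2 * (2 * s) ^ m := by ring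

lemma integrable [IsFiniteMeasure P] (h : HasBernsteinMoments X v c P) : Integrable X P := by
  have hsq : Integrable (fun ω ↦ X ω ^ 2) P := by
    refine (lintegral_ofReal_ne_top_iff_integrable (h.aemeasurable.pow_const 2).aestronglyMeasurable
      (.of_forall fun _ ↦ sq_nonneg _)).1 (ne_top_of_le_ne_top ENNReal.ofReal_ne_top
      ((lintegral_congr fun ω ↦ ?_).trans_le (h.lintegral_le 0)))
    rw [zero_add, sq_abs]
  exact ((memLp_two_iff_integrable_sq h.aemeasurable.aestronglyMeasurable).2 hsq).integrable
    one_le_two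

variable {l : ℝ}

lemma lintegral_exp_abs_sub_le (h : HasBernsteinMoments X v c P) (hv : 0 ≤ v) (hc : 0 ≤ c)
    (hl : 0 ≤ l) (hcl : c * l < 1) :
    ∫⁻ ω, .ofReal (rexp |l * X ω| - 1 - |l * X ω|) ∂P ≤
      .ofReal (v * l ^ 2 / (2 * (1 - c * l))) := by
  have hX := h.aemeasurable
  have hgeom : HasSum (fun m : ℕ ↦ v * l ^ 2 / 2 * (c * l) ^ m)
      (v * l ^ 2 / (2 * (1 - c * l))) := by
    convert! (hasSum_geometric_of_lt_one (by positivity) hcl).mul_left (v * l ^ 2 / 2) using 1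
    rw [← div_eq_mul_inv, div_div]
  have hterm (m : ℕ) :
      ∫⁻ ω, .ofReal (|l * X ω| ^ (m + 2) / (m + 2).factorial) ∂P ≤
        .ofReal (v * l ^ 2 / 2 * (c * l) ^ m) := calc
    _ = .ofReal ((m + 2).factorial : ℝ)⁻¹ * ∫⁻ ω, .ofReal (|l * X ω| ^ (m + 2)) ∂P := by
      rw [← lintegral_const_mul' _ _ ENNReal.ofReal_ne_top]
      simp only [div_eq_inv_mul, ENNReal.ofReal_mul (inv_nonneg.2 (Nat.cast_nonneg _))]
    _ ≤ .ofReal ((m + 2).factorial : ℝ)⁻¹ *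
        .ofReal ((m + 2).factorial / 2 * (l ^ 2 * v) * (|l| * c) ^ m) := by
      gcongr
      exact (h.const_mul l).lintegral_le m
    _ = .ofReal (v * l ^ 2 / 2 * (c * l) ^ m) := by
      rw [← ENNReal.ofReal_mul (by positivity), abs_of_nonneg hl]
      congr 1
      field_simp
  calc ∫⁻ ω, .ofReal (rexp |l * X ω| - 1 - |l * X ω|) ∂P
      = ∑' m : ℕ, ∫⁻ ω, .ofReal (|l * X ω| ^ (m + 2) / (m + 2).factorial) ∂P := by
        rw [← lintegral_tsum fun m ↦ by fun_prop]
        refine lintegral_congr fun ω ↦ ?_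
        have hsum := hasSum_exp_abs_sub (l * X ω)
        rw [← hsum.tsum_eq, ENNReal.ofReal_tsum_of_nonneg (fun _ ↦ by positivity) hsum.summable]
    _ ≤ ∑' m : ℕ, ENNReal.ofReal (v * l ^ 2 / 2 * (c * l) ^ m) := ENNReal.tsum_le_tsum hterm
    _ = .ofReal (v * l ^ 2 / (2 * (1 - c * l))) := by
        rw [← hgeom.tsum_eq, ENNReal.ofReal_tsum_of_nonneg (fun _ ↦ by positivity) hgeom.summable]

lemma integrable_exp_abs_sub (h : HasBernsteinMoments X v c P) (hv : 0 ≤ v) (hc : 0 ≤ c)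
    (hl : 0 ≤ l) (hcl : c * l < 1) :
    Integrable (fun ω ↦ rexp |l * X ω| - 1 - |l * X ω|) P := by
  have hX := h.aemeasurable
  exact (lintegral_ofReal_ne_top_iff_integrable (by fun_prop)
    (.of_forall fun ω ↦ exp_abs_sub_nonneg _)).1
    (ne_top_of_le_ne_top ENNReal.ofReal_ne_top (h.lintegral_exp_abs_sub_le hv hc hl hcl))

lemma integral_exp_abs_sub_le (h : HasBernsteinMoments X v c P) (hv : 0 ≤ v) (hc : 0 ≤ c)
    (hl : 0 ≤ l) (hcl : c * l < 1) :
    ∫ ω, (rexp |l * X ω| - 1 - |l * X ω|) ∂P ≤ v * l ^ 2 / (2 * (1 - c * l)) := by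
  have hbound : 0 ≤ v * l ^ 2 / (2 * (1 - c * l)) :=
    div_nonneg (by positivity) (by linarith)
  rw [← ENNReal.ofReal_le_ofReal_iff hbound, ofReal_integral_eq_lintegral_ofReal
    (h.integrable_exp_abs_sub hv hc hl hcl)
    (.of_forall fun ω ↦ exp_abs_sub_nonneg _)]
  exact h.lintegral_exp_abs_sub_le hv hc hl hcl

lemma integrable_exp_mul [IsFiniteMeasure P] (h : HasBernsteinMoments X v c P) (hv : 0 ≤ v)
    (hc : 0 ≤ c) (hl : 0 ≤ l) (hcl : c * l < 1) : Integrable (fun ω ↦ rexp (l * X ω)) P := by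
  have hX := h.aemeasurable
  refine (((integrable_const 1).add (h.integrable.const_mul l)).add
    (h.integrable_exp_abs_sub hv hc hl hcl)).mono' (by fun_prop) (.of_forall fun ω ↦ ?_)
  rw [norm_of_nonneg (exp_nonneg _)]
  exact exp_le_one_add_add_exp_abs_sub _

lemma mgf_le [IsProbabilityMeasure P] (h : HasBernsteinMoments X v c P) (hv : 0 ≤ v)
    (hc : 0 ≤ c) (hl : 0 ≤ l) (hcl : c * l < 1) :
    mgf X P l ≤ rexp (l * P[X] + v * l ^ 2 / (2 * (1 - c * l))) := by
  have hlin : Integrable (fun ω ↦ 1 + l * X ω) P :=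
    (integrable_const 1).add (h.integrable.const_mul l)
  have hrem := h.integrable_exp_abs_sub hv hc hl hcl
  calc mgf X P l
      ≤ ∫ ω, ((1 + l * X ω) + (rexp |l * X ω| - 1 - |l * X ω|)) ∂P :=
        integral_mono (h.integrable_exp_mul hv hc hl hcl) (hlin.add hrem)
          fun ω ↦ exp_le_one_add_add_exp_abs_sub _
    _ = 1 + l * P[X] + ∫ ω, (rexp |l * X ω| - 1 - |l * X ω|) ∂P := by
        rw [integral_add hlin hrem, integral_add (integrable_const 1) (h.integrable.const_mul l),
          integral_const_mul, integral_const, probReal_univ, one_smul]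
    _ ≤ 1 + l * P[X] + v * l ^ 2 / (2 * (1 - c * l)) := by
        gcongr
        exact h.integral_exp_abs_sub_le hv hc hl hcl
    _ ≤ rexp (l * P[X] + v * l ^ 2 / (2 * (1 - c * l))) := by
        linarith [add_one_le_exp (l * P[X] + v * l ^ 2 / (2 * (1 - c * l)))]

end HasBernsteinMoments

/-- A sub-gamma right tail: the moment-generating function of `X` is bounded on `[0, c⁻¹)` by that
in Bernstein's inequality, with variance proxy `v` and scale `c`. Compare `HasSubgaussianMGF`. -/
structure HasSubgammaMGF {Ω : Type*} {mΩ : MeasurableSpace Ω} (X : Ω → ℝ) (v c : ℝ)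
    (P : Measure Ω) : Prop where
  integrable_exp_mul : ∀ l : ℝ, 0 ≤ l → c * l < 1 → Integrable (fun ω ↦ rexp (l * X ω)) P
  mgf_le : ∀ l : ℝ, 0 ≤ l → c * l < 1 → mgf X P l ≤ rexp (v * l ^ 2 / (2 * (1 - c * l)))

lemma HasBernsteinMoments.hasSubgammaMGF_sub_integral [IsProbabilityMeasure P]
    (h : HasBernsteinMoments X v c P) (hv : 0 ≤ v) (hc : 0 ≤ c) :
    HasSubgammaMGF (fun ω ↦ X ω - P[X]) v c P where
  integrable_exp_mul l hl hcl := by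
    simpa only [sub_eq_add_neg, mul_add, mul_neg, exp_add] using
      (h.integrable_exp_mul hv hc hl hcl).mul_const (rexp (-(l * P[X])))
  mgf_le l hl hcl := calc
    mgf (fun ω ↦ X ω - P[X]) P l = mgf X P l * rexp (-(l * P[X])) := by
      simp only [sub_eq_add_neg, mgf_add_const, mul_neg]
    _ ≤ rexp (l * P[X] + v * l ^ 2 / (2 * (1 - c * l))) * rexp (-(l * P[X])) := by
      gcongr
      exact h.mgf_le hv hc hl hcl
    _ = rexp (v * l ^ 2 / (2 * (1 - c * l))) := by
      rw [← exp_add]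
      ring_nf

namespace HasSubgammaMGF

lemma sum_of_iIndepFun {ι : Type*} {X : ι → Ω → ℝ} {v : ι → ℝ} (hX : ∀ i, AEMeasurable (X i) P)
    (hind : iIndepFun X P) (h : ∀ i, HasSubgammaMGF (X i) (v i) c P) (s : Finset ι) :
    HasSubgammaMGF (∑ i ∈ s, X i) (∑ i ∈ s, v i) c P where
  integrable_exp_mul l hl hcl := by
    have := hind.isProbabilityMeasure
    by_contra hinteg
    have hzero := mgf_undef hinteg
    rw [hind.mgf_sum₀ hX] at hzero
    exact (Finset.prod_pos fun i _ ↦ mgf_pos ((h i).integrable_exp_mul l hl hcl)).ne' hzero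
  mgf_le l hl hcl := by
    rw [hind.mgf_sum₀ hX, Finset.sum_mul, Finset.sum_div, exp_sum]
    exact Finset.prod_le_prod (fun _ _ ↦ mgf_nonneg) fun i _ ↦ (h i).mgf_le l hl hcl

/-- The Chernoff parameter `ε / (v + 2 * (c * ε))` is not the optimal one, but it gives Bernstein's
exponent and, unlike the usual `ε / (v + c * ε)`, is also admissible when `v = 0`. -/
lemma measureReal_ge_le [IsProbabilityMeasure P] (h : HasSubgammaMGF X v c P) (hv : 0 ≤ v)
    (hc : 0 ≤ c) {ε : ℝ} (hε : 0 ≤ ε) :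
    P.real {ω | ε ≤ X ω} ≤ rexp (-ε ^ 2 / (2 * (v + c * ε))) := by
  rcases (add_nonneg hv (mul_nonneg hc hε)).eq_or_lt with hzero | hpos
  · simp [← hzero]
  have hD : 0 < v + 2 * (c * ε) := by nlinarith [mul_nonneg hc hε]
  set l := ε / (v + 2 * (c * ε)) with hl
  have hcl : 1 - c * l = (v + c * ε) / (v + 2 * (c * ε)) := by
    rw [hl, ← mul_div_assoc, one_sub_div hD.ne']
    ring
  have hl0 : 0 ≤ l := by positivity
  have hcl1 : c * l < 1 := by linarith [div_pos hpos hD]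
  calc P.real {ω | ε ≤ X ω} ≤ rexp (-l * ε) * mgf X P l :=
        measure_ge_le_exp_mul_mgf ε hl0 (h.integrable_exp_mul l hl0 hcl1)
    _ ≤ rexp (-l * ε) * rexp (v * l ^ 2 / (2 * (1 - c * l))) := by
        gcongr
        exact h.mgf_le l hl0 hcl1
    _ = rexp (-ε ^ 2 / (2 * (v + c * ε))) := by
        rw [← exp_add, hcl, hl]
        congr 1
        generalize c * ε = a at *
        field_simp
        ring

end HasSubgammaMGF

namespace HasBernsteinMoments

variable {ι : Type*} [Fintype ι] {X : ι → Ω → ℝ} {v : ι → ℝ}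

lemma measureReal_sum_sub_integral_ge_le (hind : iIndepFun X P)
    (h : ∀ i, HasBernsteinMoments (X i) (v i) c P) (hv : ∀ i, 0 ≤ v i) (hc : 0 ≤ c) {ε : ℝ}
    (hε : 0 ≤ ε) :
    P.real {ω | ε ≤ ∑ i, (X i ω - P[X i])} ≤ rexp (-ε ^ 2 / (2 * (∑ i, v i + c * ε))) := by
  have := hind.isProbabilityMeasure
  have hcentered := hind.comp (fun i x ↦ x - P[X i]) fun i ↦ by fun_prop
  have hsum := HasSubgammaMGF.sum_of_iIndepFun
    (fun i ↦ (h i).aemeasurable.sub_const (P[X i])) hcentered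
    (fun i ↦ (h i).hasSubgammaMGF_sub_integral (hv i) hc) Finset.univ
  simpa only [Finset.sum_apply] using
    hsum.measureReal_ge_le (Finset.sum_nonneg fun i _ ↦ hv i) hc hε

lemma measureReal_abs_sum_sub_integral_ge_le (hind : iIndepFun X P)
    (h : ∀ i, HasBernsteinMoments (X i) (v i) c P) (hv : ∀ i, 0 ≤ v i) (hc : 0 ≤ c) {ε : ℝ}
    (hε : 0 ≤ ε) :
    P.real {ω | ε ≤ |∑ i, (X i ω - P[X i])|} ≤
      2 * rexp (-ε ^ 2 / (2 * (∑ i, v i + c * ε))) := by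
  have := hind.isProbabilityMeasure
  have hneg := measureReal_sum_sub_integral_ge_le (X := fun i ↦ -X i)
    (hind.comp (fun _ x ↦ -x) fun _ ↦ measurable_neg) (fun i ↦ (h i).neg) hv hc hε
  have hneg_sum (ω : Ω) : ∑ i, ((-X i) ω - P[-X i]) = -∑ i, (X i ω - P[X i]) := by
    simp only [Pi.neg_apply, integral_neg, sub_neg_eq_add, neg_add_eq_sub, ← Finset.sum_neg_distrib,
      neg_sub]
  have hsplit : {ω | ε ≤ |∑ i, (X i ω - P[X i])|} ⊆
      {ω | ε ≤ ∑ i, (X i ω - P[X i])} ∪ {ω | ε ≤ ∑ i, ((-X i) ω - P[-X i])} := by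
    rintro ω (hω : ε ≤ |_|)
    rcases le_abs.1 hω with hpos | hneg
    exacts [.inl hpos, .inr (hneg.trans_eq (hneg_sum ω).symm)]
  calc P.real {ω | ε ≤ |∑ i, (X i ω - P[X i])|}
      ≤ P.real {ω | ε ≤ ∑ i, (X i ω - P[X i])} +
          P.real {ω | ε ≤ ∑ i, ((-X i) ω - P[-X i])} :=
        (measureReal_mono hsplit).trans (measureReal_union_le _ _)
    _ ≤ 2 * rexp (-ε ^ 2 / (2 * (∑ i, v i + c * ε))) := by
        rw [two_mul]
        exact add_le_add (measureReal_sum_sub_integral_ge_le hind h hv hc hε) hneg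

lemma measureReal_abs_average_sub_integral_ge_le {v : ℝ} (hind : iIndepFun X P)
    (h : ∀ i, HasBernsteinMoments (X i) v c P) (hv : 0 ≤ v) (hc : 0 ≤ c) {t : ℝ} (ht : 0 ≤ t) :
    P.real {ω | t ≤ |(Fintype.card ι : ℝ)⁻¹ * ∑ i, X i ω -
        ∫ ω', (Fintype.card ι : ℝ)⁻¹ * ∑ i, X i ω' ∂P|} ≤
      2 * rexp (-(Fintype.card ι * t ^ 2) / (2 * (v + c * t))) := by
  have := hind.isProbabilityMeasure
  set N := (Fintype.card ι : ℝ)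
  have hN : 0 ≤ N := Nat.cast_nonneg _
  simp only [integral_const_mul, integral_finsetSum _ fun i _ ↦ (h i).integrable, ← mul_sub,
    ← Finset.sum_sub_distrib, abs_mul, abs_inv, abs_of_nonneg hN]
  calc P.real {ω | t ≤ N⁻¹ * |∑ i, (X i ω - P[X i])|}
      ≤ P.real {ω | N * t ≤ |∑ i, (X i ω - P[X i])|} := by
        refine measureReal_mono fun ω (hω : t ≤ N⁻¹ * _) ↦ ?_
        refine (mul_le_mul_of_nonneg_left hω hN).trans ?_
        rw [← mul_assoc]
        exact mul_le_of_le_one_left (abs_nonneg _) mul_inv_le_one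
    _ ≤ 2 * rexp (-(N * t) ^ 2 / (2 * (∑ _ : ι, v + c * (N * t)))) :=
        measureReal_abs_sum_sub_integral_ge_le hind h (fun _ ↦ hv) hc (by positivity)
    _ = 2 * rexp (-(N * t ^ 2) / (2 * (v + c * t))) := by
        rw [Finset.sum_const, Finset.card_univ, nsmul_eq_mul]
        rcases hN.eq_or_lt with hzero | hpos
        · simp [← hzero]
        · rw [show -(N * t) ^ 2 = N * -(N * t ^ 2) by ring,
            show 2 * (N * v + c * (N * t)) = N * (2 * (v + c * t)) by ring,
            mul_div_mul_left _ _ hpos.ne']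

end HasBernsteinMoments

end Bernstein

lemma ConvexLE.map_sum_mul_pi {ι : Type*} [Fintype ι] {ν : ι → Measure ℝ}
    [∀ i, IsProbabilityMeasure (ν i)] (h : ∀ i, ConvexLE (ν i) (gaussianReal 0 1)) (c : ι → ℝ) :
    ConvexLE ((Measure.pi ν).map fun x ↦ ∑ i, c i * x i)
      (gaussianReal 0 (∑ i, c i ^ 2).toNNReal) := by
  have hterm (i : ι) : ConvexLE ((Measure.pi ν).map fun x ↦ c i * x i)
      (gaussianReal 0 (c i ^ 2).toNNReal) := by
    have hcoord := ((measurePreserving_eval ν i).map_eq.symm ▸ h i).map_const_mul (c i)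
    rw [Measure.map_map (by fun_prop) (by fun_prop), gaussianReal_map_const_mul, mul_zero,
      mul_one] at hcoord
    rwa [Real.toNNReal_of_nonneg (sq_nonneg (c i))]
  have hsum := ConvexLE.map_sum_gaussianReal
    (fun i ↦ ((measurable_pi_apply i).const_mul (c i)).aemeasurable)
    (iIndepFun_pi (μ := ν) (X := fun i x ↦ c i * x) fun i ↦
      (measurable_const_mul (c i)).aemeasurable) hterm Finset.univ
  rw [← Real.toNNReal_sum_of_nonneg fun i _ ↦ sq_nonneg (c i)] at hsum
  simpa only [Finset.sum_fn] using hsum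

section ProductMeasure

variable {ι κ E : Type*} [Fintype ι] [Fintype κ] [MeasurableSpace E] (ν : ι → κ → Measure E)
  [∀ i k, IsProbabilityMeasure (ν i k)]

lemma measurePreserving_swap_pi_pi :
    MeasurePreserving (fun (M : ι → κ → E) k i ↦ M i k)
      (Measure.pi fun i ↦ Measure.pi fun k ↦ ν i k)
      (Measure.pi fun k ↦ Measure.pi fun i ↦ ν i k) := by
  have hrows := Measure.infinitePi_map_curry ν
  have hcols := Measure.infinitePi_map_curry fun k i ↦ ν i k
  have hswap := Measure.infinitePi_map_piCongrLeft (fun a : κ × ι ↦ ν a.2 a.1)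
    (Equiv.prodComm ι κ)
  simp only [Measure.infinitePi_eq_pi] at hrows hcols hswap
  refine ⟨by fun_prop, ?_⟩
  rw [← hrows, ← hcols, ← hswap, Measure.map_map (by fun_prop) (by fun_prop),
    Measure.map_map (by fun_prop) (by fun_prop)]
  congr 1

lemma measurePreserving_column_pi_pi (k : κ) :
    MeasurePreserving (fun (M : ι → κ → E) i ↦ M i k)
      (Measure.pi fun i ↦ Measure.pi fun k ↦ ν i k) (Measure.pi fun i ↦ ν i k) :=
  (measurePreserving_eval _ k).comp (measurePreserving_swap_pi_pi ν)

lemma iIndepFun_column_pi_pi :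
    iIndepFun (fun k (M : ι → κ → E) i ↦ M i k)
      (Measure.pi fun i ↦ Measure.pi fun k ↦ ν i k) := by
  rw [iIndepFun_iff_map_fun_eq_pi_map fun k ↦
    (measurePreserving_column_pi_pi ν k).measurable.aemeasurable]
  simp only [(measurePreserving_column_pi_pi ν _).map_eq]
  exact (measurePreserving_swap_pi_pi ν).map_eq

end ProductMeasure

lemma one_sub_norm_sq_pos {E : Type*} [SeminormedAddGroup E] {x : E} (hx : ‖x‖ < 1) :
    0 < 1 - ‖x‖ ^ 2 := by
  nlinarith [norm_nonneg x]

section InnerProductSpace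

variable {E : Type*} [NormedAddCommGroup E] [InnerProductSpace ℝ E]

lemma inner_sq_le_norm_sq_mul_norm_sq (x y : E) : ⟪x, y⟫ ^ 2 ≤ ‖x‖ ^ 2 * ‖y‖ ^ 2 := by
  rw [← mul_pow, ← sq_abs]
  exact pow_le_pow_left₀ (abs_nonneg _) (abs_real_inner_le_norm x y) 2

lemma hasDerivAt_sqrt_one_sub_norm_sq {γ : ℝ → E} {v : E} {s : ℝ} (hγ : HasDerivAt γ v s)
    (hs : ‖γ s‖ < 1) :
    HasDerivAt (fun s ↦ √(1 - ‖γ s‖ ^ 2)) (-(⟪γ s, v⟫ / √(1 - ‖γ s‖ ^ 2))) s := by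
  refine ((hγ.norm_sq.const_sub 1).sqrt (one_sub_norm_sq_pos hs).ne').congr_deriv ?_
  field_simp

lemma inner_fderiv_gradient_eq_of_hasDerivAt [CompleteSpace E] {f : E → ℝ} {x v : E}
    {φ' : ℝ → ℝ} {φ'' : ℝ} (hf : ContDiffAt ℝ 2 f x)
    (hφ' : ∀ᶠ s in nhds 0, HasDerivAt (fun s : ℝ ↦ f (x + s • v)) (φ' s) s)
    (hφ'' : HasDerivAt φ' φ'' 0) : ⟪fderiv ℝ (gradient f) x v, v⟫ = φ'' := by
  have hline (s : ℝ) : HasDerivAt (fun s : ℝ ↦ x + s • v) v s := by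
    simpa using ((hasDerivAt_id s).smul_const v).const_add x
  have hgrad : DifferentiableAt ℝ (gradient f) x :=
    (InnerProductSpace.toDual ℝ E).symm.toContinuousLinearEquiv.differentiableAt.comp x
      ((hf.fderiv_right (m := 1) (by norm_num)).differentiableAt one_ne_zero)
  have hinner : HasDerivAt (fun s : ℝ ↦ ⟪gradient f (x + s • v), v⟫)
      ⟪fderiv ℝ (gradient f) x v, v⟫ 0 := by
    have hgrad' : HasFDerivAt (gradient f) (fderiv ℝ (gradient f) x) (x + (0 : ℝ) • v) := by
      simpa using hgrad.hasFDerivAt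
    simpa using (hgrad'.comp_hasDerivAt 0 (hline 0)).inner ℝ (hasDerivAt_const 0 v)
  have hdiff : ∀ᶠ s : ℝ in nhds 0, DifferentiableAt ℝ f (x + s • v) := by
    have htendsto : Filter.Tendsto (fun s : ℝ ↦ x + s • v) (nhds 0) (nhds x) := by
      simpa using (hline 0).continuousAt.tendsto
    filter_upwards [htendsto.eventually (hf.eventually (by simp))] with s hs
    exact hs.differentiableAt two_ne_zero
  have heq : (fun s : ℝ ↦ ⟪gradient f (x + s • v), v⟫) =ᶠ[nhds 0] φ' := by
    filter_upwards [hφ', hdiff] with s hs hfs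
    rw [inner_gradient_left]
    exact (hfs.hasFDerivAt.comp_hasDerivAt s (hline s)).unique hs
  exact (hinner.congr_of_eventuallyEq heq.symm).unique hφ''

end InnerProductSpace

lemma hasDerivAt_tanh (x : ℝ) : HasDerivAt tanh (cosh x ^ 2)⁻¹ x := by
  have h := (hasDerivAt_sinh x).div (hasDerivAt_cosh x) (cosh_pos x).ne'
  rw [← show tanh = sinh / cosh from funext tanh_eq_sinh_div_cosh] at h
  refine h.congr_deriv ?_
  rw [← sq, ← sq, cosh_sq_sub_sinh_sq, one_div]

lemma hasDerivAt_hmu {μ : ℝ} (hμ : μ ≠ 0) (z : ℝ) : HasDerivAt (hmu μ) (tanh (z / μ)) z := by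
  have h := ((((hasDerivAt_id z).div_const μ).cosh).log (cosh_pos _).ne').const_mul μ
  refine h.congr_deriv ?_
  rw [tanh_eq_sinh_div_cosh]
  simp only [id]
  field_simp

/-- First derivative of `qmap n` at `w` in the direction `v`. -/
def qmapDeriv (n : ℕ) (w v : EuclideanSpace ℝ (Fin (n - 1))) : Fin n → ℝ :=
  fun i ↦ if h : (i : ℕ) < n - 1 then v ⟨i, h⟩ else -(⟪w, v⟫ / √(1 - ‖w‖ ^ 2))

/-- Second derivative of `qmap n` at `w`, twice in the direction `v`. -/
def qmapDeriv2 (n : ℕ) (w v : EuclideanSpace ℝ (Fin (n - 1))) : Fin n → ℝ :=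
  fun i ↦ if (i : ℕ) < n - 1 then 0
    else -(‖v‖ ^ 2 / √(1 - ‖w‖ ^ 2) + ⟪w, v⟫ ^ 2 / √(1 - ‖w‖ ^ 2) ^ 3)

/-- Second derivative of `h_μ(q(w)ᵀ x)` in the direction `v`: the contribution of one column `x`
to the Hessian quadratic form of `g`. -/
def columnHess (n : ℕ) (μ : ℝ) (w v : EuclideanSpace ℝ (Fin (n - 1))) (x : Fin n → ℝ) : ℝ :=
  μ⁻¹ * (cosh ((∑ i, qmap n w i * x i) / μ) ^ 2)⁻¹ * (∑ i, qmapDeriv n w v i * x i) ^ 2 +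
    tanh ((∑ i, qmap n w i * x i) / μ) * ∑ i, qmapDeriv2 n w v i * x i

section Hessian

variable {n p : ℕ} {μ : ℝ} {w v : EuclideanSpace ℝ (Fin (n - 1))}

lemma contDiffAt_gfun (Y : Matrix (Fin n) (Fin p) ℝ) (hw : ‖w‖ < 1) :
    ContDiffAt ℝ 2 (gfun n p μ Y) w := by
  have hq (i : Fin n) : ContDiffAt ℝ 2 (fun w ↦ qmap n w i) w := by
    unfold qmap
    split_ifs with h
    · exact contDiffAt_piLp_apply 2
    · exact (contDiffAt_const.sub (contDiff_norm_sq ℝ).contDiffAt).sqrt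
        (one_sub_norm_sq_pos hw).ne'
  unfold gfun hmu
  refine contDiffAt_const.mul (.sum fun k _ ↦ contDiffAt_const.mul ?_)
  exact (contDiff_cosh.contDiffAt.comp w
    ((ContDiffAt.sum fun i _ ↦ (hq i).mul contDiffAt_const).div_const μ)).log (cosh_pos _).ne'

variable {γ : ℝ → EuclideanSpace ℝ (Fin (n - 1))} {s : ℝ}

lemma hasDerivAt_qmap (hγ : HasDerivAt γ v s) (hs : ‖γ s‖ < 1) (i : Fin n) :
    HasDerivAt (fun s ↦ qmap n (γ s) i) (qmapDeriv n (γ s) v i) s := by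
  unfold qmap qmapDeriv
  split_ifs with h
  · exact (EuclideanSpace.proj (𝕜 := ℝ) (⟨i, h⟩ : Fin (n - 1))).hasFDerivAt.comp_hasDerivAt s hγ
  · exact hasDerivAt_sqrt_one_sub_norm_sq hγ hs

lemma hasDerivAt_qmapDeriv (hγ : HasDerivAt γ v s) (hs : ‖γ s‖ < 1) (i : Fin n) :
    HasDerivAt (fun s ↦ qmapDeriv n (γ s) v i) (qmapDeriv2 n (γ s) v i) s := by
  have hr : √(1 - ‖γ s‖ ^ 2) ≠ 0 := (sqrt_pos.2 (one_sub_norm_sq_pos hs)).ne'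
  unfold qmapDeriv qmapDeriv2
  split_ifs with h
  · exact hasDerivAt_const s _
  · refine ((hγ.inner ℝ (hasDerivAt_const s v)).div
      (hasDerivAt_sqrt_one_sub_norm_sq hγ hs) hr).neg.congr_deriv ?_
    rw [inner_zero_right, zero_add, real_inner_self_eq_norm_sq]
    field_simp
    ring

lemma hasDerivAt_sum_qmap_mul (hγ : HasDerivAt γ v s) (hs : ‖γ s‖ < 1) (x : Fin n → ℝ) :
    HasDerivAt (fun s ↦ ∑ i, qmap n (γ s) i * x i) (∑ i, qmapDeriv n (γ s) v i * x i) s :=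
  .fun_sum fun i _ ↦ (hasDerivAt_qmap hγ hs i).mul_const (x i)

lemma hasDerivAt_gfun (hμ : μ ≠ 0) (hγ : HasDerivAt γ v s) (hs : ‖γ s‖ < 1)
    (Y : Matrix (Fin n) (Fin p) ℝ) :
    HasDerivAt (fun s ↦ gfun n p μ Y (γ s))
      ((p : ℝ)⁻¹ * ∑ k, tanh ((∑ i, qmap n (γ s) i * Y i k) / μ) *
        ∑ i, qmapDeriv n (γ s) v i * Y i k) s :=
  .const_mul _ <| .fun_sum fun k _ ↦
    (hasDerivAt_hmu hμ _).comp s (hasDerivAt_sum_qmap_mul hγ hs fun i ↦ Y i k)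

lemma hasDerivAt_tanh_mul_sum_qmapDeriv_mul (hγ : HasDerivAt γ v s) (hs : ‖γ s‖ < 1)
    (x : Fin n → ℝ) :
    HasDerivAt (fun s ↦ tanh ((∑ i, qmap n (γ s) i * x i) / μ) *
      ∑ i, qmapDeriv n (γ s) v i * x i) (columnHess n μ (γ s) v x) s := by
  have htanh := (hasDerivAt_tanh _).comp s ((hasDerivAt_sum_qmap_mul hγ hs x).div_const μ)
  have hsum : HasDerivAt (fun s ↦ ∑ i, qmapDeriv n (γ s) v i * x i)
      (∑ i, qmapDeriv2 n (γ s) v i * x i) s :=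
    .fun_sum fun i _ ↦ (hasDerivAt_qmapDeriv hγ hs i).mul_const (x i)
  refine (htanh.mul hsum).congr_deriv ?_
  simp only [columnHess, Function.comp_apply]
  ring

lemma inner_hessg_eq (hμ : μ ≠ 0) (Y : Matrix (Fin n) (Fin p) ℝ) (hw : ‖w‖ < 1) :
    ⟪hessg n p μ Y w v, v⟫ = (p : ℝ)⁻¹ * ∑ k, columnHess n μ w v fun i ↦ Y i k := by
  have hline (s : ℝ) : HasDerivAt (fun s : ℝ ↦ w + s • v) v s := by
    simpa using ((hasDerivAt_id s).smul_const v).const_add w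
  have hball : ∀ᶠ s : ℝ in nhds 0, ‖w + s • v‖ < 1 :=
    (hline 0).continuousAt.norm.eventually_lt continuousAt_const (by simpa using hw)
  refine inner_fderiv_gradient_eq_of_hasDerivAt (contDiffAt_gfun Y hw)
    (hball.mono fun s hs ↦ hasDerivAt_gfun hμ (hline s) hs Y)
    (.const_mul _ <| .fun_sum fun k _ ↦ ?_)
  simpa using hasDerivAt_tanh_mul_sum_qmapDeriv_mul (μ := μ) (hline 0) (by simpa using hw)
    fun i ↦ Y i k

lemma sum_sq_dite_le (a : Fin (n - 1) → ℝ) (b : ℝ) :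
    ∑ i : Fin n, (if h : (i : ℕ) < n - 1 then a ⟨i, h⟩ else b) ^ 2 ≤ ∑ i, a i ^ 2 + b ^ 2 := by
  cases n with
  | zero => simp [sq_nonneg]
  | succ m => simp [Fin.sum_univ_castSucc]

lemma sum_qmapDeriv_sq_le (hw : ‖w‖ < 1) :
    ∑ i, qmapDeriv n w v i ^ 2 ≤ ‖v‖ ^ 2 / (1 - ‖w‖ ^ 2) := by
  have hpos := one_sub_norm_sq_pos hw
  calc ∑ i, qmapDeriv n w v i ^ 2
      ≤ ∑ i, v i ^ 2 + (-(⟪w, v⟫ / √(1 - ‖w‖ ^ 2))) ^ 2 := sum_sq_dite_le _ _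
    _ = ‖v‖ ^ 2 + ⟪w, v⟫ ^ 2 / (1 - ‖w‖ ^ 2) := by
        rw [EuclideanSpace.real_norm_sq_eq v, neg_sq, div_pow, sq_sqrt hpos.le]
    _ ≤ ‖v‖ ^ 2 + ‖w‖ ^ 2 * ‖v‖ ^ 2 / (1 - ‖w‖ ^ 2) := by
        gcongr
        exact inner_sq_le_norm_sq_mul_norm_sq w v
    _ = ‖v‖ ^ 2 / (1 - ‖w‖ ^ 2) := by
        field_simp
        ring

lemma sum_qmapDeriv2_sq_le (hw : ‖w‖ < 1) :
    ∑ i, qmapDeriv2 n w v i ^ 2 ≤ (‖v‖ ^ 2 / √(1 - ‖w‖ ^ 2) ^ 3) ^ 2 := by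
  have hpos := one_sub_norm_sq_pos hw
  have := sqrt_pos.2 hpos
  calc ∑ i, qmapDeriv2 n w v i ^ 2
      ≤ (-(‖v‖ ^ 2 / √(1 - ‖w‖ ^ 2) + ⟪w, v⟫ ^ 2 / √(1 - ‖w‖ ^ 2) ^ 3)) ^ 2 := by
        simpa only [Pi.zero_apply, zero_pow two_ne_zero, Finset.sum_const_zero, zero_add] using!
          sum_sq_dite_le (n := n) 0 _
    _ ≤ (‖v‖ ^ 2 / √(1 - ‖w‖ ^ 2) + ‖w‖ ^ 2 * ‖v‖ ^ 2 / √(1 - ‖w‖ ^ 2) ^ 3) ^ 2 := by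
        rw [neg_sq]
        gcongr
        exact inner_sq_le_norm_sq_mul_norm_sq w v
    _ = (‖v‖ ^ 2 / √(1 - ‖w‖ ^ 2) ^ 3) ^ 2 := by
        congr 1
        field_simp
        rw [sq_sqrt hpos.le]
        ring

lemma pos_of_mem_GammaSet (hw : w ∈ GammaSet n) : 0 < n := by
  refine Nat.pos_of_ne_zero ?_
  rintro rfl
  -- The radius of `Γ` is `√(-1 / 0) = 0`.
  have hlt : ‖w‖ < √((4 * ((0 : ℕ) : ℝ) - 1) / (4 * (0 : ℕ))) := hw
  rw [Nat.cast_zero, mul_zero, div_zero, sqrt_zero] at hlt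
  exact hlt.not_ge (norm_nonneg w)

lemma inv_lt_one_sub_norm_sq_of_mem_GammaSet (hw : w ∈ GammaSet n) :
    (4 * n : ℝ)⁻¹ < 1 - ‖w‖ ^ 2 := by
  have hn : (0 : ℝ) < n := by exact_mod_cast pos_of_mem_GammaSet hw
  have hlt : ‖w‖ ^ 2 < (4 * n - 1) / (4 * n) := (lt_sqrt (norm_nonneg w)).1 hw
  rw [sub_div, div_self (by positivity), one_div] at hlt
  linarith

lemma norm_lt_one_of_mem_GammaSet (hw : w ∈ GammaSet n) : ‖w‖ < 1 := by
  have hn : (0 : ℝ) ≤ (4 * n : ℝ)⁻¹ := by positivity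
  nlinarith [inv_lt_one_sub_norm_sq_of_mem_GammaSet hw, norm_nonneg w]

lemma inv_one_sub_norm_sq_le_of_mem_GammaSet (hw : w ∈ GammaSet n) :
    (1 - ‖w‖ ^ 2)⁻¹ ≤ (4 * n : ℝ) := by
  have hn : (0 : ℝ) < n := by exact_mod_cast pos_of_mem_GammaSet hw
  exact inv_le_of_inv_le₀ (by positivity) (inv_lt_one_sub_norm_sq_of_mem_GammaSet hw).le

lemma inv_sqrt_one_sub_norm_sq_pow_three_le_of_mem_GammaSet (hw : w ∈ GammaSet n) (hμ0 : 0 < μ)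
    (hμ : μ ≤ 1 / √n) : (√(1 - ‖w‖ ^ 2) ^ 3)⁻¹ ≤ 8 * n / μ := by
  have hinv := inv_one_sub_norm_sq_le_of_mem_GammaSet hw
  have hpos := one_sub_norm_sq_pos (norm_lt_one_of_mem_GammaSet hw)
  have hsqrt : √(1 - ‖w‖ ^ 2)⁻¹ ≤ 2 * √n := calc
    √(1 - ‖w‖ ^ 2)⁻¹ ≤ √(2 ^ 2 * n) := sqrt_le_sqrt (by linarith)
    _ = 2 * √n := by rw [sqrt_mul (by positivity), sqrt_sq zero_le_two]
  have hsqrt_n : √n ≤ μ⁻¹ := by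
    rw [one_div] at hμ
    simpa using inv_anti₀ hμ0 hμ
  calc (√(1 - ‖w‖ ^ 2) ^ 3)⁻¹ = (1 - ‖w‖ ^ 2)⁻¹ * √(1 - ‖w‖ ^ 2)⁻¹ := by
        rw [pow_succ, sq_sqrt hpos.le, mul_inv, sqrt_inv]
    _ ≤ (4 * n) * (2 * μ⁻¹) := by
        gcongr
        linarith
    _ = 8 * n / μ := by ring

end Hessian

section Concentration

variable {n p : ℕ} {μ θ : ℝ} {w v : EuclideanSpace ℝ (Fin (n - 1))}

lemma measurable_tanh : Measurable tanh :=
  (continuous_iff_continuousAt.2 fun x ↦ (hasDerivAt_tanh x).continuousAt).measurable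

lemma measurable_columnHess : Measurable (columnHess n μ w v) := by
  have := measurable_tanh
  unfold columnHess
  fun_prop

section IndependentEntries

variable {ν : Fin n → Measure ℝ} [∀ i, IsProbabilityMeasure (ν i)]

lemma hasBernsteinMoments_inv_cosh_sq_mul_sum_qmapDeriv_sq
    (hν : ∀ i, ConvexLE (ν i) (gaussianReal 0 1)) (hμ : 0 < μ) (hw : w ∈ GammaSet n) :
    HasBernsteinMoments (fun x ↦ μ⁻¹ * (cosh ((∑ i, qmap n w i * x i) / μ) ^ 2)⁻¹ *
      (∑ i, qmapDeriv n w v i * x i) ^ 2) ((8 * n / μ * ‖v‖ ^ 2) ^ 2) (8 * n / μ * ‖v‖ ^ 2)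
      (Measure.pi ν) := by
  have hgauss := (HasBernsteinMoments.sq_of_convexLE_gaussianReal
    (Measurable.aemeasurable (by fun_prop))
    (ConvexLE.map_sum_mul_pi hν (qmapDeriv n w v))).const_mul μ⁻¹
  rw [← sq_abs μ⁻¹, ← mul_pow, abs_of_pos (inv_pos.2 hμ), Real.coe_toNNReal _ (by positivity)]
    at hgauss
  have hscale : μ⁻¹ * (2 * ∑ i, qmapDeriv n w v i ^ 2) ≤ 8 * n / μ * ‖v‖ ^ 2 := calc
    _ ≤ μ⁻¹ * (2 * (‖v‖ ^ 2 * (4 * n))) := by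
      gcongr
      exact (sum_qmapDeriv_sq_le (norm_lt_one_of_mem_GammaSet hw)).trans
        (mul_le_mul_of_nonneg_left (inv_one_sub_norm_sq_le_of_mem_GammaSet hw) (by positivity))
    _ = 8 * n / μ * ‖v‖ ^ 2 := by ring
  refine hgauss.mono (by fun_prop) (fun x ↦ ?_) (by positivity) (by positivity)
    (by gcongr) hscale
  have hsech : (cosh ((∑ i, qmap n w i * x i) / μ) ^ 2)⁻¹ ≤ 1 :=
    inv_le_one_of_one_le₀ (one_le_pow₀ (one_le_cosh _))
  rw [abs_of_nonneg (by positivity), abs_of_nonneg (by positivity)]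
  gcongr
  exact mul_le_of_le_one_right (by positivity) hsech

lemma hasBernsteinMoments_tanh_mul_sum_qmapDeriv2
    (hν : ∀ i, ConvexLE (ν i) (gaussianReal 0 1)) (hμ0 : 0 < μ) (hμ : μ ≤ 1 / √n)
    (hw : w ∈ GammaSet n) :
    HasBernsteinMoments (fun x ↦ tanh ((∑ i, qmap n w i * x i) / μ) *
      ∑ i, qmapDeriv2 n w v i * x i) ((8 * n / μ * ‖v‖ ^ 2) ^ 2) (8 * n / μ * ‖v‖ ^ 2)
      (Measure.pi ν) := by
  have hgauss := HasBernsteinMoments.of_convexLE_gaussianReal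
    (Measurable.aemeasurable (by fun_prop))
    (ConvexLE.map_sum_mul_pi hν (qmapDeriv2 n w v))
  rw [Real.coe_toNNReal _ (by positivity)] at hgauss
  have hvar : ∑ i, qmapDeriv2 n w v i ^ 2 ≤ (8 * n / μ * ‖v‖ ^ 2) ^ 2 := calc
    _ ≤ ((√(1 - ‖w‖ ^ 2) ^ 3)⁻¹ * ‖v‖ ^ 2) ^ 2 := by
      simpa only [div_eq_inv_mul] using sum_qmapDeriv2_sq_le (norm_lt_one_of_mem_GammaSet hw)
    _ ≤ (8 * n / μ * ‖v‖ ^ 2) ^ 2 := by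
      gcongr
      exact inv_sqrt_one_sub_norm_sq_pow_three_le_of_mem_GammaSet hw hμ0 hμ
  have htanh := measurable_tanh
  refine hgauss.mono (by fun_prop) (fun x ↦ ?_) (by positivity) (by positivity) hvar
    (sqrt_le_iff.2 ⟨by positivity, hvar⟩)
  rw [abs_mul]
  exact mul_le_of_le_one_left (abs_nonneg _) (abs_tanh_lt_one _).le

lemma hasBernsteinMoments_columnHess (hν : ∀ i, ConvexLE (ν i) (gaussianReal 0 1)) (hμ0 : 0 < μ)
    (hμ : μ ≤ 1 / √n) (hw : w ∈ GammaSet n) :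
    HasBernsteinMoments (columnHess n μ w v) (4 * (8 * n / μ * ‖v‖ ^ 2) ^ 2)
      (2 * (8 * n / μ * ‖v‖ ^ 2)) (Measure.pi ν) :=
  (hasBernsteinMoments_inv_cosh_sq_mul_sum_qmapDeriv_sq hν hμ0 hw).add
    (hasBernsteinMoments_tanh_mul_sum_qmapDeriv2 hν hμ0 hμ hw)

end IndependentEntries

lemma hasBernsteinMoments_columnHess_div (hθ : θ ∈ Set.Icc 0 1) (hμ0 : 0 < μ) (hμ : μ ≤ 1 / √n)
    (hw : w ∈ GammaSet n) (hv : v ≠ 0) (k : Fin p) :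
    HasBernsteinMoments (fun X : Fin n → Fin p → ℝ ↦ columnHess n μ w v (fun i ↦ X i k) / ‖v‖ ^ 2)
      (4 * (8 * n / μ) ^ 2) (2 * (8 * n / μ)) (bgMatrix θ n p) := by
  have := isProbabilityMeasure_bg hθ
  have hvnorm : ‖v‖ ≠ 0 := norm_ne_zero_iff.2 hv
  have h := ((hasBernsteinMoments_columnHess (v := v) (fun _ ↦ convexLE_bg_gaussianReal hθ)
    hμ0 hμ hw).comp_measurePreserving
    (measurePreserving_column_pi_pi (fun _ _ ↦ bg θ) k)).const_mul (‖v‖ ^ 2)⁻¹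
  convert! h using 1
  · exact funext fun X ↦ div_eq_inv_mul _ _
  · field_simp
  · rw [abs_of_nonneg (by positivity)]
    field_simp

lemma iIndepFun_columnHess_div (hθ : θ ∈ Set.Icc 0 1) :
    iIndepFun (fun (k : Fin p) (X : Fin n → Fin p → ℝ) ↦
      columnHess n μ w v (fun i ↦ X i k) / ‖v‖ ^ 2) (bgMatrix θ n p) := by
  have := isProbabilityMeasure_bg hθ
  exact (iIndepFun_column_pi_pi fun _ _ ↦ bg θ).comp
    (fun _ x ↦ columnHess n μ w v x / ‖v‖ ^ 2) fun _ ↦ measurable_columnHess.div_const _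

end Concentration

theorem statement8_general {n p : ℕ} {θ μ : ℝ} (hθ : θ ∈ Set.Icc 0 1) (hμ0 : 0 < μ)
    (hμ : μ ≤ 1 / √n) {w : EuclideanSpace ℝ (Fin (n - 1))} (hw : w ∈ GammaSet n)
    {v : EuclideanSpace ℝ (Fin (n - 1))} (hv : v ≠ 0) {t : ℝ} (ht : 0 ≤ t) :
    bgMatrix θ n p
        {X | t ≤ |⟪hessg n p μ (Matrix.of X) w v, v⟫ / ‖v‖ ^ 2 -
                  ∫ X', ⟪hessg n p μ (Matrix.of X') w v, v⟫ / ‖v‖ ^ 2 ∂bgMatrix θ n p|} ≤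
      ENNReal.ofReal (2 * rexp (-(p * μ ^ 2 * t ^ 2) / (512 * n ^ 2 + 32 * n * μ * t))) := by
  have hind := iIndepFun_columnHess_div (n := n) (p := p) (μ := μ) (w := w) (v := v) hθ
  have hmom := hasBernsteinMoments_columnHess_div (p := p) hθ hμ0 hμ hw hv
  have := hind.isProbabilityMeasure
  have hmean (X : Fin n → Fin p → ℝ) : ⟪hessg n p μ (Matrix.of X) w v, v⟫ / ‖v‖ ^ 2 =
      (Fintype.card (Fin p) : ℝ)⁻¹ * ∑ k, columnHess n μ w v (fun i ↦ X i k) / ‖v‖ ^ 2 := by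
    rw [inner_hessg_eq hμ0.ne' _ (norm_lt_one_of_mem_GammaSet hw), mul_div_assoc, Finset.sum_div,
      Fintype.card_fin]
    rfl
  have hexponent : -(p * t ^ 2) / (2 * (4 * (8 * n / μ) ^ 2 + 2 * (8 * n / μ) * t)) =
      -(p * μ ^ 2 * t ^ 2) / (512 * n ^ 2 + 32 * n * μ * t) := by
    have := pos_of_mem_GammaSet hw
    field_simp
    ring
  have hbernstein := HasBernsteinMoments.measureReal_abs_average_sub_integral_ge_le hind hmom
    (by positivity) (by positivity) ht
  rw [Fintype.card_fin (n := p), hexponent] at hbernstein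
  simp only [hmean, Fintype.card_fin]
  exact (ofReal_measureReal).symm.trans_le (ENNReal.ofReal_le_ofReal hbernstein)

/-- Proposition: pointwise concentration of the Hessian quadratic form. -/
theorem statement8 (n p : ℕ) (θ μ : ℝ) (hθ : θ ∈ Set.Ioo (0 : ℝ) 1) (hμ0 : 0 < μ)
    (hμ : μ ≤ 1 / Real.sqrt n)
    (w : EuclideanSpace ℝ (Fin (n - 1))) (hw : w ∈ GammaSet n) (hw0 : w ≠ 0)
    (t : ℝ) (ht : 0 < t) :
    bgMatrix θ n p
        {X | t ≤ |⟪hessg n p μ (Matrix.of X) w w, w⟫ / ‖w‖ ^ 2 -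
                  ∫ X', ⟪hessg n p μ (Matrix.of X') w w, w⟫ / ‖w‖ ^ 2 ∂bgMatrix θ n p|} ≤
      ENNReal.ofReal
        (4 * Real.exp (-((p : ℝ) * μ ^ 2 * t ^ 2) /
          (512 * (n : ℝ) ^ 2 + 32 * n * μ * t))) :=
  (statement8_general (Set.Ioo_subset_Icc_self hθ) hμ0 hμ hw hw0 ht.le).trans
    (ENNReal.ofReal_le_ofReal (by gcongr; norm_num))

end
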